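/- Let n ≥ 4, let L be one of W(n), S(n), or (for n even) S̃(n) over ℂ, let H_L be the standard Cartan subalgebra of L, and let f ∈ BDer(L)_ε be a super-biderivation of weight ε ∈ H_L^*. If ε ≠ 0, then f is the zero map. -/

import Mathlib

open scoped BigOperators

noncomputable section

namespace CartanSuper

/-- Coordinates of the exterior algebra `Λ(n)` with respect to the monomial basis
`{x_S : S ⊆ {1,…,n}}`. -/
abbrev Lambda (n : ℕ) := Finset (Fin n) → ℂ

/-- Endomorphism algebra of `Λ(n)`. -/
abbrev E (n : ℕ) := Module.End ℂ (Lambda n)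

variable (n : ℕ)

/-- `(−1)^k`. -/
def msign (k : ℕ) : ℂ := (-1 : ℂ) ^ k

/-- The basis monomial `x_S = x_{i₁}⋯x_{i_k}` (indices in increasing order). -/
def mono (S : Finset (Fin n)) : Lambda n := fun T => if T = S then 1 else 0

/-- Number of inversions between `S` and `T`. -/
def inversions (S T : Finset (Fin n)) : ℕ := ((S ×ˢ T).filter fun p => p.2 < p.1).card

/-- The multiplication of `Λ(n)` in coordinates:
`x_S · x_T = (−1)^{inversions} x_{S ∪ T}` for disjoint `S, T` and `0` otherwise. -/
def lmulFun (f g : Lambda n) : Lambda n :=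
  fun U => ∑ S ∈ U.powerset, msign (inversions n S (U \ S)) * f S * g (U \ S)

/-- Left multiplication by an element of `Λ(n)`, as a linear map `Λ(n) →ₗ End Λ(n)`. -/
def mulOp : Lambda n →ₗ[ℂ] E n where
  toFun f :=
    { toFun := lmulFun n f
      map_add' := by
        intro g h; funext U
        simp [lmulFun, mul_add, Finset.sum_add_distrib]
      map_smul' := by
        intro c g; funext U
        simp only [lmulFun, Pi.smul_apply, smul_eq_mul, RingHom.id_apply, Finset.mul_sum]
        exact Finset.sum_congr rfl (by intros; ring) }
  map_add' := by
    intro f g; apply LinearMap.ext; intro h; funext U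
    show lmulFun n (f + g) h U = lmulFun n f h U + lmulFun n g h U
    simp only [lmulFun]
    rw [← Finset.sum_add_distrib]
    exact Finset.sum_congr rfl (by intros; simp [Pi.add_apply]; ring)
  map_smul' := by
    intro c f; apply LinearMap.ext; intro h; funext U
    show lmulFun n (c • f) h U = (c • lmulFun n f h) U
    simp only [lmulFun, Pi.smul_apply, smul_eq_mul, Finset.mul_sum]
    exact Finset.sum_congr rfl (by intros; ring)

/-- The superderivation `∂_i` of `Λ(n)`, in coordinates. -/
def pd (i : Fin n) : E n where
  toFun f := fun S =>
    if i ∈ S then 0 else msign (S.filter (· < i)).card * f (insert i S)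
  map_add' := by
    intro f g; funext S; by_cases h : i ∈ S <;> simp [h, mul_add]
  map_smul' := by
    intro c f; funext S; by_cases h : i ∈ S <;> simp [h] <;> ring

/-- The parity operator `σ` of `Λ(n)`: `σ(x_S) = (−1)^{|S|} x_S`. -/
def par : E n where
  toFun f := fun S => msign S.card * f S
  map_add' := by intro f g; funext S; simp [mul_add]
  map_smul' := by intro c f; funext S; simp; ring

/-- The super-commutator `[D,F] = D∘F − (−1)^{|D||F|} F∘D`, extended bilinearly to all of
`End Λ(n)` using the parity operator `σ`
(for homogeneous `D`, `σ∘D∘σ = (−1)^{|D|} D`). -/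
def sbFun (D F : E n) : E n :=
  D * F - (2:ℂ)⁻¹ • ((F + par n * F * par n) * D + (F - par n * F * par n) * (par n * D * par n))

/-- The super-commutator as a bilinear map. -/
def sbL : E n →ₗ[ℂ] E n →ₗ[ℂ] E n :=
  LinearMap.mk₂ ℂ (sbFun n)
    (fun D D' F => by
      simp only [sbFun, add_mul, sub_mul, mul_add, mul_sub, smul_mul_assoc, mul_smul_comm,
        smul_add, smul_sub]
      module)
    (fun c D F => by
      simp only [sbFun, add_mul, sub_mul, mul_add, mul_sub, smul_mul_assoc, mul_smul_comm,
        smul_add, smul_sub]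
      module)
    (fun D F F' => by
      simp only [sbFun, add_mul, sub_mul, mul_add, mul_sub, smul_mul_assoc, mul_smul_comm,
        smul_add, smul_sub]
      module)
    (fun c D F => by
      simp only [sbFun, add_mul, sub_mul, mul_add, mul_sub, smul_mul_assoc, mul_smul_comm,
        smul_add, smul_sub]
      module)

/-- Shorthand for the super-commutator. -/
def sb (D F : E n) : E n := sbL n D F

/-- The ℤ₂-homogeneous component of `Λ(n)` of parity `p`. -/
def lpar (p : ZMod 2) : Submodule ℂ (Lambda n) where
  carrier := {f | ∀ S : Finset (Fin n), (S.card : ZMod 2) ≠ p → f S = 0}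
  add_mem' := by intro f g hf hg S hS; simp [Pi.add_apply, hf S hS, hg S hS]
  zero_mem' := by intro S hS; rfl
  smul_mem' := by intro c f hf S hS; simp [Pi.smul_apply, hf S hS]

/-- The ℤ-homogeneous component of `Λ(n)` of degree `m` (zero unless `0 ≤ m ≤ n`). -/
def ldeg (m : ℤ) : Submodule ℂ (Lambda n) where
  carrier := {f | ∀ S : Finset (Fin n), (S.card : ℤ) ≠ m → f S = 0}
  add_mem' := by intro f g hf hg S hS; simp [Pi.add_apply, hf S hS, hg S hS]
  zero_mem' := by intro S hS; rfl
  smul_mem' := by intro c f hf S hS; simp [Pi.smul_apply, hf S hS]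

/-- Endomorphisms of `Λ(n)` that are ℤ₂-homogeneous of parity `p`. -/
def epar (p : ZMod 2) : Submodule ℂ (E n) where
  carrier := {D | ∀ (q : ZMod 2), ∀ f ∈ lpar n q, D f ∈ lpar n (q + p)}
  add_mem' := by
    intro D F hD hF q f hf
    simpa [LinearMap.add_apply] using (lpar n (q + p)).add_mem (hD q f hf) (hF q f hf)
  zero_mem' := by intro q f hf; simpa using (lpar n (q + p)).zero_mem
  smul_mem' := by
    intro c D hD q f hf
    simpa [LinearMap.smul_apply] using (lpar n (q + p)).smul_mem c (hD q f hf)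

/-- Endomorphisms of `Λ(n)` that are ℤ-homogeneous of degree `d`. -/
def edeg (d : ℤ) : Submodule ℂ (E n) where
  carrier := {D | ∀ (m : ℤ), ∀ f ∈ ldeg n m, D f ∈ ldeg n (m + d)}
  add_mem' := by
    intro D F hD hF m f hf
    simpa [LinearMap.add_apply] using (ldeg n (m + d)).add_mem (hD m f hf) (hF m f hf)
  zero_mem' := by intro m f hf; simpa using (ldeg n (m + d)).zero_mem
  smul_mem' := by
    intro c D hD m f hf
    simpa [LinearMap.smul_apply] using (ldeg n (m + d)).smul_mem c (hD m f hf)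

/-- The linear map `(f₁,…,f_n) ↦ ∑ᵢ fᵢ ∂ᵢ`. -/
def Wmap : (Fin n → Lambda n) →ₗ[ℂ] E n where
  toFun F := ∑ i, mulOp n (F i) * pd n i
  map_add' := by
    intro F G
    simp only [Pi.add_apply, map_add, add_mul, Finset.sum_add_distrib]
  map_smul' := by
    intro c F
    simp only [RingHom.id_apply, Pi.smul_apply, map_smul, smul_mul_assoc, Finset.smul_sum]

/-- The divergence `(f₁,…,f_n) ↦ ∑ᵢ ∂ᵢ(fᵢ)`. -/
def divMap : (Fin n → Lambda n) →ₗ[ℂ] Lambda n where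
  toFun F := ∑ i, pd n i (F i)
  map_add' := by
    intro F G
    simp only [Pi.add_apply, map_add, Finset.sum_add_distrib]
  map_smul' := by
    intro c F
    simp only [RingHom.id_apply, Pi.smul_apply, map_smul, Finset.smul_sum]

/-- The Witt type Lie superalgebra `W(n) = {∑ fᵢ∂ᵢ : fᵢ ∈ Λ(n)}`. -/
def Wn : Submodule ℂ (E n) := LinearMap.range (Wmap n)

/-- Divergence-free coefficient tuples. -/
def divFree : Submodule ℂ (Fin n → Lambda n) := LinearMap.ker (divMap n)

/-- The special type Lie superalgebra `S(n) = {∑ fᵢ∂ᵢ : ∑ ∂ᵢ(fᵢ) = 0}`. -/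
def Sn : Submodule ℂ (E n) := (divFree n).map (Wmap n)

/-- The top monomial `ω = x₁x₂⋯x_n`. -/
def omegaTop : Lambda n := mono n Finset.univ

/-- `1 − x₁x₂⋯x_n`. -/
def oneM : Lambda n := mono n ∅ - omegaTop n

/-- Multiplication of every coefficient by `1 − x₁⋯x_n`. -/
def oneMScale : (Fin n → Lambda n) →ₗ[ℂ] (Fin n → Lambda n) :=
  LinearMap.pi fun i => (mulOp n (oneM n)) ∘ₗ LinearMap.proj i

/-- The Lie superalgebra `S̃(n) = {(1−x₁⋯x_n)∑ fᵢ∂ᵢ : ∑ ∂ᵢ(fᵢ) = 0}` (`n` even). -/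
def Stn : Submodule ℂ (E n) := (divFree n).map (Wmap n ∘ₗ oneMScale n)

/-- The conjugate index `i'`. -/
def cidx (i : Fin n) : Fin n :=
  ⟨if i.val < n / 2 then i.val + n / 2 else if i.val < 2 * (n / 2) then i.val - n / 2 else i.val,
   by have := i.isLt; split_ifs <;> omega⟩

/-- The linear map `f ↦ D_H(f) = (−1)^{|f|} ∑ᵢ ∂ᵢ(f)∂_{i'}` (the sign is implemented by the
parity operator `σ`, so that this is a single linear map agreeing with `D_H` on homogeneous
elements). -/
def DHmap : Lambda n →ₗ[ℂ] E n where
  toFun f := ∑ i, mulOp n (pd n i (par n f)) * pd n (cidx n i)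
  map_add' := by
    intro f g
    simp only [map_add, add_mul, Finset.sum_add_distrib]
  map_smul' := by
    intro c f
    simp only [RingHom.id_apply, map_smul, smul_mul_assoc, Finset.smul_sum]

/-- Evaluation of the top coefficient. -/
def evalTop : Lambda n →ₗ[ℂ] ℂ := LinearMap.proj Finset.univ

/-- The Hamiltonian Lie superalgebra `H(n) = {D_H(f) : f ∈ ⊕_{i=0}^{n−1} Λ(n)_i}`. -/
def Hn : Submodule ℂ (E n) := (LinearMap.ker (evalTop n)).map (DHmap n)

/-- `H̃(n) = {D_H(f) : f ∈ Λ(n)}`. -/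
def HtN : Submodule ℂ (E n) := LinearMap.range (DHmap n)

/-- The degree derivation `𝒞 = ∑ᵢ xᵢ∂ᵢ`. -/
def CC : E n := ∑ i, mulOp n (mono n {i}) * pd n i

/-- The span of the diagonal elements `xᵢ∂ᵢ`. -/
def diagSpan : Submodule ℂ (E n) :=
  Submodule.span ℂ (Set.range fun i : Fin n => mulOp n (mono n {i}) * pd n i)

/-- The four families of Cartan type Lie superalgebras. -/
inductive CT | W | S | St | H
deriving DecidableEq

/-- Validity of the parameter `n` for each family. -/
def CT.valid : CT → ℕ → Prop
  | .W, n => 4 ≤ n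
  | .S, n => 4 ≤ n
  | .St, n => 4 ≤ n ∧ Even n
  | .H, n => 4 < n

/-- The Cartan type Lie superalgebra `L` itself. -/
def CT.algebra : CT → (n : ℕ) → Submodule ℂ (E n)
  | .W, n => Wn n
  | .S, n => Sn n
  | .St, n => Stn n
  | .H, n => Hn n

/-- The extended algebra `L'`: `L' = L` for `W(n)` and `S̃(n)`, `L' = S(n) ⊕ ℂ𝒞` for `S(n)`,
and `L' = H̃(n) ⊕ ℂ𝒞` for `H(n)`. -/
def CT.prime : CT → (n : ℕ) → Submodule ℂ (E n)
  | .W, n => Wn n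
  | .S, n => Sn n ⊔ Submodule.span ℂ {CC n}
  | .St, n => Stn n
  | .H, n => HtN n ⊔ Submodule.span ℂ {CC n}

/-- The top degree `ξ_L` of the ℤ-grading. -/
def CT.xi : CT → (n : ℕ) → ℤ
  | .W, n => (n : ℤ) - 1
  | .S, n => (n : ℤ) - 2
  | .St, n => (n : ℤ) - 2
  | .H, n => (n : ℤ) - 3

/-- The ℤ-grading component `L_j = L ∩ W(n)_j`; for `S̃(n)` the component of degree `−1`
is `span{(1−x₁⋯x_n)∂ᵢ}` instead. -/
def CT.grade (t : CT) (n : ℕ) (j : ℤ) : Submodule ℂ (E n) :=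
  match t with
  | .St =>
      if j = -1 then
        Submodule.span ℂ (Set.range fun i : Fin n => mulOp n (oneM n) * pd n i)
      else Stn n ⊓ edeg n j
  | t => t.algebra n ⊓ edeg n j

/-- The ℤ-grading component `L'_j` of the extended algebra `L'`. -/
def CT.grade' (t : CT) (n : ℕ) (j : ℤ) : Submodule ℂ (E n) :=
  match t with
  | .St => CT.grade .St n j
  | t => t.prime n ⊓ edeg n j

/-- The standard Cartan subalgebra `H_L` of `L`: the part of the diagonal
`span{xᵢ∂ᵢ}` lying in `L`. -/
def CT.cartan (t : CT) (n : ℕ) : Submodule ℂ (E n) := t.algebra n ⊓ diagSpan n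

/-- The weight space of `M ⊆ End Λ(n)` of weight `μ ∈ H_L^*` under the adjoint action
of the standard Cartan subalgebra of `L`. -/
def wtsp (t : CT) (n : ℕ) (M : Submodule ℂ (E n)) (μ : Module.Dual ℂ (t.cartan n)) :
    Submodule ℂ (E n) where
  carrier := {x | x ∈ M ∧ ∀ h : t.cartan n, sbL n h x = μ h • x}
  add_mem' := by
    rintro x y ⟨hx, hx'⟩ ⟨hy, hy'⟩
    exact ⟨M.add_mem hx hy, fun h => by simp [map_add, hx' h, hy' h, smul_add]⟩
  zero_mem' := ⟨M.zero_mem, fun h => by simp⟩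
  smul_mem' := by
    rintro c x ⟨hx, hx'⟩
    exact ⟨M.smul_mem c hx, fun h => by simp [map_smul, hx' h, smul_comm c]⟩

/-- The set of roots of `M` with respect to the standard Cartan subalgebra of `L`:
the nonzero weights with nonzero weight space. -/
def CT.roots (t : CT) (n : ℕ) (M : Submodule ℂ (E n)) : Set (Module.Dual ℂ (t.cartan n)) :=
  {ε | ε ≠ 0 ∧ wtsp t n M ε ≠ ⊥}

/-- The sign `(−1)^p` for `p ∈ ℤ₂`. -/
def sgn (p : ZMod 2) : ℂ := (-1 : ℂ) ^ p.val

/-- `f` is a super-biderivation of `L` of ℤ₂-degree `pf`: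
a bilinear map with `f(L_α, L_β) ⊆ L_{α+β+pf}` satisfying
`f([x,y],z) = (−1)^{|x||f|}[x,f(y,z)] + (−1)^{|y||z|}[f(x,z),y]` and
`f(x,[y,z]) = [f(x,y),z] + (−1)^{(|f|+|x|)|y|}[y,f(x,z)]` for homogeneous `x,y,z ∈ L`.
(The bilinear map is given as a bilinear map on the ambient space `End Λ(n)`;
only its restriction to `L` is relevant.) -/
structure IsSuperBider (L : Submodule ℂ (E n)) (pf : ZMod 2)
    (f : E n →ₗ[ℂ] E n →ₗ[ℂ] E n) : Prop where
  maps : ∀ (α β : ZMod 2), ∀ x ∈ L ⊓ epar n α, ∀ y ∈ L ⊓ epar n β,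
    f x y ∈ L ⊓ epar n (α + β + pf)
  eq1 : ∀ (α β γ : ZMod 2), ∀ x ∈ L ⊓ epar n α, ∀ y ∈ L ⊓ epar n β, ∀ z ∈ L ⊓ epar n γ,
    f (sbL n x y) z = sgn (α * pf) • sbL n x (f y z) + sgn (β * γ) • sbL n (f x z) y
  eq2 : ∀ (α β γ : ZMod 2), ∀ x ∈ L ⊓ epar n α, ∀ y ∈ L ⊓ epar n β, ∀ z ∈ L ⊓ epar n γ,
    f x (sbL n y z) = sbL n (f x y) z + sgn ((pf + α) * β) • sbL n y (f x z)

/-- `D` is a superderivation of `L` of ℤ₂-degree `p`: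
`D(L_α) ⊆ L_{α+p}` and `D([x,y]) = [D(x),y] + (−1)^{|D||x|}[x,D(y)]` for homogeneous
`x, y ∈ L`. (Given as a linear map on the ambient space `End Λ(n)`.) -/
structure IsSuperDer (L : Submodule ℂ (E n)) (p : ZMod 2)
    (D : E n →ₗ[ℂ] E n) : Prop where
  maps : ∀ (α : ZMod 2), ∀ x ∈ L ⊓ epar n α, D x ∈ L ⊓ epar n (α + p)
  leib : ∀ (α β : ZMod 2), ∀ x ∈ L ⊓ epar n α, ∀ y ∈ L ⊓ epar n β,
    D (sbL n x y) = sbL n (D x) y + sgn (p * α) • sbL n x (D y)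

/-- `f ∈ BDer(L)_ε`: the super-biderivation `f` has weight `ε ∈ H_L^*`, i.e.
`f(L_η, L_ζ) ⊆ L_{ε+η+ζ}` for all weights `η, ζ`. -/
def CT.HasWeight (t : CT) (n : ℕ) (f : E n →ₗ[ℂ] E n →ₗ[ℂ] E n)
    (ε : Module.Dual ℂ (t.cartan n)) : Prop :=
  ∀ (η ζ : Module.Dual ℂ (t.cartan n)),
    ∀ x ∈ wtsp t n (t.algebra n) η, ∀ y ∈ wtsp t n (t.algebra n) ζ,
      f x y ∈ wtsp t n (t.algebra n) (ε + η + ζ)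

/-- `f ∈ BDer(L)_i`: the super-biderivation `f` has ℤ-degree `i`, i.e.
`f(L_j, L_k) ⊆ L_{i+j+k}` for all `j, k ∈ ℤ`. -/
def CT.HasDeg (t : CT) (n : ℕ) (f : E n →ₗ[ℂ] E n →ₗ[ℂ] E n) (i : ℤ) : Prop :=
  ∀ (j k : ℤ), ∀ x ∈ t.grade n j, ∀ y ∈ t.grade n k, f x y ∈ t.grade n (i + j + k)

/-! Putting an element `k ∈ H_L` into the Leibniz rules gives, for `x` and `z` of weights `ζ` and
`η`, `(ε + ζ)(k) f(x, z) = -[f(x, k), z]` and `(ε + η)(k) f(x, z) = ∓[f(k, z), x]`. Hence, once `f`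
vanishes whenever one argument lies in `H_L`, it vanishes on `L_ζ × L_η` unless `ζ = η = -ε`; and
for `ε(h) ≠ 0` the same identities reduce the case of an argument in `H_L` to `f(h, h) = 0`.

Both `v = f(h, h)`, of weight `μ = ε`, and `v = f(x, z)` for `x, z ∈ L_{-ε}`, of weight `μ = -ε`,
vanish for one reason: the Leibniz rules make `v` commute with `x_i ∂_j`, `i ≠ j`, whenever the root
of `x_i ∂_j` does not vanish on `ker μ`. As `n ≥ 4`, this forces `v` to commute with every
`x_i ∂_j`, hence with every `x_i ∂_i - x_j ∂_j`, and a nonzero weight vector with this property has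
weight zero. -/

section ExteriorAlgebra

variable {n : ℕ}

/-- The sign of moving `x_i` past the generators of `x_S` that precede it. -/
def insertSign (i : Fin n) (S : Finset (Fin n)) : ℂ := msign (S.filter (· < i)).card

/-- The operator of left multiplication by the generator `x_i`. -/
def xOp (i : Fin n) : E n := mulOp n (mono n {i})

lemma insertSign_mul_self (i : Fin n) (S : Finset (Fin n)) :
    insertSign i S * insertSign i S = 1 := by
  rw [insertSign, msign, ← mul_pow, neg_mul_neg, one_mul, one_pow]

lemma insertSign_insert {i : Fin n} {S : Finset (Fin n)} (hi : i ∉ S) (j : Fin n) :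
    insertSign j (insert i S) = (if i < j then -1 else 1) * insertSign j S := by
  unfold insertSign msign
  rw [Finset.filter_insert]
  split_ifs with hij
  · rw [Finset.card_insert_of_notMem (by simp [hi]), pow_succ, mul_comm]
  · rw [one_mul]

lemma insertSign_erase {i : Fin n} {S : Finset (Fin n)} (hi : i ∈ S) (j : Fin n) :
    insertSign j (S.erase i) = (if i < j then -1 else 1) * insertSign j S := by
  have h := insertSign_insert (Finset.notMem_erase i S) j
  rw [Finset.insert_erase hi] at h
  rw [h]
  split_ifs <;> ring

lemma insertSign_union (i : Fin n) {S T : Finset (Fin n)} (hST : Disjoint S T) :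
    insertSign i (S ∪ T) = insertSign i S * insertSign i T := by
  rw [insertSign, insertSign, insertSign, msign, msign, msign, ← pow_add, Finset.filter_union,
    Finset.card_union_of_disjoint (Finset.disjoint_filter_filter hST)]

lemma msign_inversions_singleton (i : Fin n) (T : Finset (Fin n)) :
    msign (inversions n {i} T) = insertSign i T := by
  rw [insertSign, inversions, Finset.singleton_product, Finset.filter_map, Finset.card_map]
  rfl

lemma msign_inversions_insert {i : Fin n} {S : Finset (Fin n)} (hi : i ∉ S)
    (T : Finset (Fin n)) :
    msign (inversions n (insert i S) T) = insertSign i T * msign (inversions n S T) := by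
  rw [← msign_inversions_singleton, msign, msign, msign, ← pow_add, inversions, inversions,
    inversions, Finset.insert_eq, Finset.union_product, Finset.filter_union,
    Finset.card_union_of_disjoint]
  exact Finset.disjoint_filter_filter
    (Finset.disjoint_product.2 (Or.inl (Finset.disjoint_singleton_left.2 hi)))

lemma xOp_apply (i : Fin n) (g : Lambda n) (U : Finset (Fin n)) :
    xOp i g U = if i ∈ U then insertSign i U * g (U.erase i) else 0 := by
  change lmulFun n (mono n {i}) g U = _
  unfold lmulFun mono
  split_ifs with hi
  · rw [Finset.sum_eq_single_of_mem {i} (by simpa using hi)]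
    · rw [msign_inversions_singleton, Finset.sdiff_singleton_eq_erase, insertSign_erase hi]
      simp
    · intro S _ hS
      simp [hS]
  · refine Finset.sum_eq_zero fun S hS => ?_
    have hSi : S ≠ {i} := by
      rintro rfl
      exact hi (by simpa using hS)
    simp [hSi]

lemma pd_apply (i : Fin n) (g : Lambda n) (U : Finset (Fin n)) :
    pd n i g U = if i ∈ U then 0 else insertSign i U * g (insert i U) := rfl

lemma endo_ext {A B : E n} (h : ∀ (g : Lambda n) (U : Finset (Fin n)), A g U = B g U) : A = B :=
  LinearMap.ext fun g => funext (h g)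

lemma xOp_mul_xOp_add (i j : Fin n) : xOp i * xOp j + xOp j * xOp i = 0 := by
  refine endo_ext fun g U => ?_
  simp only [LinearMap.add_apply, Module.End.mul_apply, Pi.add_apply, xOp_apply, Finset.mem_erase,
    LinearMap.zero_apply, Pi.zero_apply, Finset.erase_right_comm (a := j) (b := i)]
  obtain rfl | hij := eq_or_ne i j
  · simp
  rcases hij.lt_or_gt with hlt | hlt <;> by_cases hi : i ∈ U <;> by_cases hj : j ∈ U <;>
    simp [hi, hj, hij, hij.symm, hlt, hlt.not_gt, insertSign_erase] <;> ring

lemma pd_mul_pd_add (i j : Fin n) : pd n i * pd n j + pd n j * pd n i = 0 := by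
  refine endo_ext fun g U => ?_
  simp only [LinearMap.add_apply, Module.End.mul_apply, Pi.add_apply, pd_apply, Finset.mem_insert,
    LinearMap.zero_apply, Pi.zero_apply, Finset.insert_comm j i]
  obtain rfl | hij := eq_or_ne i j
  · simp
  rcases hij.lt_or_gt with hlt | hlt <;> by_cases hi : i ∈ U <;> by_cases hj : j ∈ U <;>
    simp [hi, hj, hij, hij.symm, hlt, hlt.not_gt, insertSign_insert] <;> ring

lemma pd_mul_xOp_add (i j : Fin n) :
    pd n i * xOp j + xOp j * pd n i = if i = j then 1 else 0 := by
  refine endo_ext fun g U => ?_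
  simp only [LinearMap.add_apply, Module.End.mul_apply, Pi.add_apply, pd_apply, xOp_apply,
    Finset.mem_insert, Finset.mem_erase]
  obtain rfl | hij := eq_or_ne i j
  · by_cases hi : i ∈ U <;>
      simp [hi, insertSign_insert, insertSign_erase, ← mul_assoc, insertSign_mul_self]
  rcases hij.lt_or_gt with hlt | hlt <;> by_cases hi : i ∈ U <;> by_cases hj : j ∈ U <;>
    simp [hi, hj, hij, hij.symm, hlt, hlt.not_gt, insertSign_insert, insertSign_erase,
      Finset.erase_insert_of_ne] <;> ring

lemma mulOp_mono_empty : mulOp n (mono n ∅) = 1 := by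
  refine endo_ext fun g U => ?_
  change lmulFun n _ g U = g U
  rw [lmulFun, Finset.sum_eq_single_of_mem ∅ (by simp)]
  · simp [mono, inversions, msign]
  · intro S _ hS
    simp [mono, hS]

lemma mulOp_apply_mono_empty (g : Lambda n) : mulOp n g (mono n ∅) = g := by
  funext U
  change lmulFun n g _ U = g U
  rw [lmulFun, Finset.sum_eq_single_of_mem U (by simp)]
  · simp [mono, inversions, msign]
  · intro S hS hSU
    have hUS : U \ S ≠ ∅ := fun h =>
      hSU ((Finset.mem_powerset.1 hS).antisymm (Finset.sdiff_eq_empty_iff_subset.1 h))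
    simp [mono, hUS]

lemma mulOp_omegaTop_apply (g : Lambda n) : mulOp n (omegaTop n) g = g ∅ • omegaTop n := by
  funext U
  change lmulFun n _ g U = _
  simp only [lmulFun, omegaTop, mono, Pi.smul_apply, smul_eq_mul]
  by_cases hU : U = Finset.univ
  · rw [hU, Finset.sum_eq_single_of_mem Finset.univ (by simp)]
    · simp [inversions, msign]
    · intro S _ hS
      simp [hS]
  · refine (Finset.sum_eq_zero fun S hS => ?_).trans (by simp [hU])
    have hSU : S ≠ Finset.univ := fun h =>
      hU (Finset.univ_subset_iff.1 (h ▸ Finset.mem_powerset.1 hS))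
    simp [hSU]

lemma mulOp_xOp_apply (i : Fin n) (g : Lambda n) : mulOp n (xOp i g) = xOp i * mulOp n g := by
  refine endo_ext fun h U => ?_
  rw [Module.End.mul_apply, xOp_apply]
  change lmulFun n (xOp i g) h U =
    if i ∈ U then insertSign i U * lmulFun n g h (U.erase i) else 0
  unfold lmulFun
  have hzero {V S : Finset (Fin n)} (hV : i ∉ V) (hS : S ∈ V.powerset) :
      ∀ c d : ℂ, c * xOp i g S * d = 0 := fun c d => by
    rw [xOp_apply, if_neg fun h => hV (Finset.mem_powerset.1 hS h), mul_zero, zero_mul]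
  split_ifs with hi
  swap
  · exact Finset.sum_eq_zero fun S hS => hzero hi hS _ _
  obtain ⟨V, hV, rfl⟩ : ∃ V, i ∉ V ∧ insert i V = U :=
    ⟨U.erase i, Finset.notMem_erase i U, Finset.insert_erase hi⟩
  rw [Finset.erase_insert hV, Finset.sum_powerset_insert hV,
    Finset.sum_eq_zero fun S hS => hzero hV hS _ _, zero_add, Finset.mul_sum]
  refine Finset.sum_congr rfl fun S hS => ?_
  have hSV := Finset.mem_powerset.1 hS
  have hiS : i ∉ S := fun h => hV (hSV h)
  have hsplit : insertSign i V = insertSign i S * insertSign i (V \ S) := by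
    rw [← insertSign_union i Finset.disjoint_sdiff, Finset.union_sdiff_of_subset hSV]
  rw [xOp_apply, if_pos (Finset.mem_insert_self i S), msign_inversions_insert hiS,
    Finset.erase_insert hiS, Finset.insert_sdiff_insert, Finset.sdiff_insert_of_notMem hV,
    insertSign_insert hiS, insertSign_insert hV, if_neg (lt_irrefl i), hsplit]
  ring

lemma xOp_mono {i : Fin n} {S : Finset (Fin n)} (hi : i ∉ S) :
    xOp i (mono n S) = insertSign i S • mono n (insert i S) := by
  funext U
  rw [xOp_apply, Pi.smul_apply, smul_eq_mul, mono, mono]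
  by_cases hU : U = insert i S
  · simp [hU, hi, insertSign_insert]
  · have hne : i ∈ U → U.erase i ≠ S := fun hiU h => hU (by rw [← h, Finset.insert_erase hiU])
    simp +contextual [hU, hne]

lemma mem_of_xOp_stable {M : Submodule ℂ (Lambda n)} (hone : mono n ∅ ∈ M)
    (hxOp : ∀ i, ∀ g ∈ M, xOp i g ∈ M) (g : Lambda n) : g ∈ M := by
  have hmono : ∀ S, mono n S ∈ M := by
    intro S
    induction S using Finset.induction_on with
    | empty => exact hone
    | insert i S hi ih =>
      have h := M.smul_mem (insertSign i S) (hxOp i _ ih)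
      rwa [xOp_mono hi, smul_smul, insertSign_mul_self, one_smul] at h
  have hg : g = ∑ S, g S • mono n S := by
    funext U
    simp [mono, Finset.sum_apply]
  rw [hg]
  exact M.sum_mem fun S _ => M.smul_mem _ (hmono S)

end ExteriorAlgebra

section Commutator

variable {A : Type*} [NonUnitalRing A]

lemma lie_mul_right (a b c : A) : ⁅a, b * c⁆ = ⁅a, b⁆ * c + b * ⁅a, c⁆ := by
  simp only [Ring.lie_def, sub_mul, mul_sub, mul_assoc]
  abel

lemma lie_mul_left_eq_anticommutators (a b c : A) :
    ⁅a * b, c⁆ = a * (b * c + c * b) - (a * c + c * a) * b := by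
  simp only [Ring.lie_def, mul_add, add_mul, mul_assoc]
  abel

lemma commute_lie {a b c : A} (hb : Commute a b) (hc : Commute a c) :
    Commute a ⁅b, c⁆ :=
  (hb.mul_right hc).sub_right (hc.mul_right hb)

end Commutator

section GeneralLinear

variable {n : ℕ}

attribute [local instance] LieRing.ofAssociativeRing

/-- The element `x_i ∂_j` of the degree-zero part `gl(n)` of `W(n)`. -/
def matUnit (i j : Fin n) : E n := xOp i * pd n j

lemma matUnit_lie_xOp (i j k : Fin n) :
    ⁅(matUnit i j : E n), xOp k⁆ = if j = k then xOp i else 0 := by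
  rw [matUnit, lie_mul_left_eq_anticommutators, pd_mul_xOp_add, xOp_mul_xOp_add, zero_mul, sub_zero,
    mul_ite, mul_one, mul_zero]

lemma matUnit_lie_pd (i j k : Fin n) :
    ⁅(matUnit i j : E n), pd n k⁆ = if i = k then -pd n j else 0 := by
  rw [matUnit, lie_mul_left_eq_anticommutators, pd_mul_pd_add, mul_zero, add_comm (xOp i * pd n k),
    pd_mul_xOp_add, ite_mul, one_mul, zero_mul, zero_sub]
  simp only [eq_comm (a := i)]
  split_ifs
  · rfl
  · exact neg_zero

lemma matUnit_lie_matUnit (i j k l : Fin n) :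
    ⁅(matUnit i j : E n), matUnit k l⁆ =
      (if j = k then matUnit i l else 0) - if i = l then matUnit k j else 0 := by
  rw [matUnit.eq_def k l, lie_mul_right, matUnit_lie_xOp, matUnit_lie_pd]
  simp only [ite_mul, zero_mul, mul_ite, mul_zero, sub_eq_add_neg]
  congr 1
  split_ifs
  · exact mul_neg (xOp k) (pd n j)
  · exact neg_zero.symm

lemma mulOp_mulOp_apply (g h : Lambda n) : mulOp n (mulOp n g h) = mulOp n g * mulOp n h := by
  have hg : g ∈ LinearMap.eqLocus ((mulOp n).compr₂ (mulOp n))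
      ((LinearMap.mul ℂ (E n)).compl₁₂ (mulOp n) (mulOp n)) := by
    refine mem_of_xOp_stable ?_ (fun i g hg => ?_) g
    · refine LinearMap.ext fun h => ?_
      simp [mulOp_mono_empty]
    · refine LinearMap.ext fun h => ?_
      have hgh : mulOp n (mulOp n g h) = mulOp n g * mulOp n h := LinearMap.congr_fun hg h
      change mulOp n (mulOp n (xOp i g) h) = mulOp n (xOp i g) * mulOp n h
      rw [mulOp_xOp_apply, Module.End.mul_apply, mulOp_xOp_apply, hgh, mul_assoc]
  exact LinearMap.congr_fun hg h

lemma matUnit_apply_mono_empty (i j : Fin n) : matUnit i j (mono n ∅) = 0 := by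
  funext U
  simp [matUnit, xOp_apply, pd_apply, mono]

lemma matUnit_lie_mulOp (i j : Fin n) (g : Lambda n) :
    ⁅(matUnit i j : E n), mulOp n g⁆ = mulOp n (matUnit i j g) := by
  suffices g ∈ LinearMap.eqLocus (LieAlgebra.ad ℂ (E n) (matUnit i j) ∘ₗ mulOp n)
      (mulOp n ∘ₗ matUnit i j) from this
  refine mem_of_xOp_stable ?_ (fun k g hg => ?_) g
  · change ⁅(matUnit i j : E n), mulOp n (mono n ∅)⁆ = mulOp n (matUnit i j (mono n ∅))
    rw [mulOp_mono_empty, matUnit_apply_mono_empty, map_zero, Ring.lie_def, mul_one, one_mul,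
      sub_self]
  · replace hg : ⁅(matUnit i j : E n), mulOp n g⁆ = mulOp n (matUnit i j g) := hg
    have happ : matUnit i j (xOp k g) = ⁅(matUnit i j : E n), xOp k⁆ g + xOp k (matUnit i j g) :=
      (sub_add_cancel (matUnit i j (xOp k g)) (xOp k (matUnit i j g))).symm
    change ⁅(matUnit i j : E n), mulOp n (xOp k g)⁆ = mulOp n (matUnit i j (xOp k g))
    rw [mulOp_xOp_apply, lie_mul_right, hg, happ, map_add, mulOp_xOp_apply, matUnit_lie_xOp]
    split_ifs
    · rw [mulOp_xOp_apply]
    · rw [LinearMap.zero_apply, map_zero, zero_mul]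

/-- The action of `x_i ∂_j` on coefficient tuples which corresponds to the adjoint action on
`W(n)`. -/
def matUnitAct (i j : Fin n) (F : Fin n → Lambda n) : Fin n → Lambda n :=
  fun m => matUnit i j (F m) - if m = j then F i else 0

lemma matUnit_lie_Wmap (i j : Fin n) (F : Fin n → Lambda n) :
    ⁅(matUnit i j : E n), Wmap n F⁆ = Wmap n (matUnitAct i j F) := by
  change ⁅(matUnit i j : E n), ∑ m, mulOp n (F m) * pd n m⁆ =
    ∑ m, mulOp n (matUnit i j (F m) - if m = j then F i else 0) * pd n m
  simp only [lie_sum, lie_mul_right, matUnit_lie_mulOp, matUnit_lie_pd, map_sub, sub_mul,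
    Finset.sum_add_distrib, Finset.sum_sub_distrib, sub_eq_add_neg (∑ _, _)]
  congr 1
  rw [Finset.sum_eq_single_of_mem i (Finset.mem_univ i) fun m _ hm => by
      rw [if_neg hm.symm, mul_zero],
    Finset.sum_eq_single_of_mem j (Finset.mem_univ j) fun m _ hm => by
      rw [if_neg hm, map_zero, zero_mul], if_pos rfl, if_pos rfl]
  exact mul_neg (mulOp n (F i)) (pd n j)

lemma divMap_matUnitAct (i j : Fin n) (F : Fin n → Lambda n) :
    divMap n (matUnitAct i j F) = matUnit i j (divMap n F) := by
  have hcomm (m : Fin n) : pd n m (matUnit i j (F m)) =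
      matUnit i j (pd n m (F m)) + if i = m then pd n j (F m) else 0 := by
    have h := LinearMap.congr_fun (matUnit_lie_pd i j m) (F m)
    rw [Ring.lie_def, LinearMap.sub_apply, Module.End.mul_apply, Module.End.mul_apply,
      sub_eq_iff_eq_add] at h
    rw [h]
    split_ifs <;> simp
  change ∑ m, pd n m (matUnit i j (F m) - if m = j then F i else 0) =
    matUnit i j (∑ m, pd n m (F m))
  simp only [map_sub, map_sum, hcomm, apply_ite (pd n _), map_zero, Finset.sum_sub_distrib,
    Finset.sum_add_distrib, Finset.sum_ite_eq, Finset.sum_ite_eq', Finset.mem_univ, if_true,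
    add_sub_cancel_right]

lemma matUnitAct_mem_divFree (i j : Fin n) {F : Fin n → Lambda n} (hF : F ∈ divFree n) :
    matUnitAct i j F ∈ divFree n := by
  rw [divFree, LinearMap.mem_ker, divMap_matUnitAct, LinearMap.mem_ker.1 hF, map_zero]

lemma matUnit_self_apply (i : Fin n) (g : Lambda n) (S : Finset (Fin n)) :
    matUnit i i g S = if i ∈ S then g S else 0 := by
  rw [matUnit, Module.End.mul_apply, xOp_apply, pd_apply]
  split_ifs with hi hi'
  · exact absurd hi' (Finset.notMem_erase i S)
  · rw [insertSign_erase hi, if_neg (lt_irrefl i), one_mul, ← mul_assoc, insertSign_mul_self,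
      one_mul, Finset.insert_erase hi]
  · rfl

lemma matUnit_self_omegaTop (i : Fin n) : matUnit i i (omegaTop n) = omegaTop n := by
  funext S
  rw [matUnit_self_apply, omegaTop, mono]
  split_ifs <;> simp_all

lemma matUnit_omegaTop {i j : Fin n} (hij : i ≠ j) : matUnit i j (omegaTop n) = 0 := by
  funext S
  rw [matUnit, Module.End.mul_apply, xOp_apply, pd_apply, omegaTop, mono]
  split_ifs with hi hj h
  · exact mul_zero _
  · have hmem : i ∈ insert j (S.erase i) := h ▸ Finset.mem_univ i
    simp [hij] at hmem
  · simp
  · rfl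

end GeneralLinear

section Parity

variable {n : ℕ}

lemma mul_mem_epar {p q : ZMod 2} {D F : E n} (hD : D ∈ epar n p) (hF : F ∈ epar n q) :
    D * F ∈ epar n (p + q) := fun r f hf => by
  rw [add_comm p q, ← add_assoc]
  exact hD (r + q) (F f) (hF r f hf)

lemma mulOp_mem_epar {p : ZMod 2} {g : Lambda n} (hg : g ∈ lpar n p) : mulOp n g ∈ epar n p := by
  refine fun q f hf U hU => Finset.sum_eq_zero fun S hS => ?_
  by_cases hSp : (S.card : ZMod 2) = p
  · have hUS : ((U \ S).card : ZMod 2) ≠ q := fun h => hU <| by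
      rw [← hSp, ← h, ← Nat.cast_add, Finset.card_sdiff_add_card_eq_card (Finset.mem_powerset.1 hS)]
    rw [hf _ hUS, mul_zero]
  · rw [hg _ hSp, mul_zero, zero_mul]

lemma pd_mem_epar (i : Fin n) : pd n i ∈ epar n 1 := fun q f hf S hS => by
  rw [pd_apply]
  split_ifs with hi
  · rfl
  · have hcard : ((insert i S).card : ZMod 2) ≠ q := fun h => hS <| by
      rw [← h, Finset.card_insert_of_notMem hi, Nat.cast_add, Nat.cast_one, add_assoc,
        CharTwo.add_self_eq_zero, add_zero]
    rw [hf _ hcard, mul_zero]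

lemma mono_mem_lpar (S : Finset (Fin n)) : mono n S ∈ lpar n S.card := fun _ hT =>
  if_neg fun h => hT (by rw [h])

lemma matUnit_mem_epar (i j : Fin n) : matUnit i j ∈ epar n 0 :=
  mul_mem_epar (p := 1) (q := 1)
    (mulOp_mem_epar (by simpa using mono_mem_lpar {i})) (pd_mem_epar j)

lemma par_apply_of_mem_lpar {q : ZMod 2} {g : Lambda n} (hg : g ∈ lpar n q) :
    par n g = sgn q • g := by
  funext S
  change msign S.card * g S = sgn q * g S
  by_cases hS : (S.card : ZMod 2) = q
  · rw [msign, sgn, ← hS, ZMod.val_natCast, ← neg_one_pow_eq_pow_mod_two]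
  · rw [hg S hS, mul_zero, mul_zero]

lemma exists_lpar_add_lpar (g : Lambda n) : ∃ g₀ ∈ lpar n 0, ∃ g₁ ∈ lpar n 1, g = g₀ + g₁ := by
  refine ⟨fun S => if (S.card : ZMod 2) = 0 then g S else 0, fun S hS => if_neg hS,
    fun S => if (S.card : ZMod 2) = 0 then 0 else g S, fun S hS => if_pos ?_, ?_⟩
  · generalize (S.card : ZMod 2) = c at hS
    decide +revert
  · funext S
    rw [Pi.add_apply]
    split_ifs <;> simp

lemma commute_par_of_mem_epar_zero {D : E n} (hD : D ∈ epar n 0) : Commute (par n) D := by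
  have hpar {q : ZMod 2} {g : Lambda n} (hg : g ∈ lpar n q) : par n (D g) = D (par n g) := by
    rw [par_apply_of_mem_lpar hg, map_smul, par_apply_of_mem_lpar (hD q g hg), add_zero]
  refine LinearMap.ext fun g => ?_
  obtain ⟨g₀, hg₀, g₁, hg₁, rfl⟩ := exists_lpar_add_lpar g
  simp only [map_add, Module.End.mul_apply, hpar hg₀, hpar hg₁]

lemma par_mul_par : par n * par n = 1 := endo_ext fun g S => by
  change msign S.card * (msign S.card * g S) = g S
  rw [← mul_assoc, msign, ← mul_pow, neg_mul_neg, one_mul, one_pow, one_mul]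

lemma par_mul_mul_par_of_mem_epar_zero {D : E n} (hD : D ∈ epar n 0) : par n * D * par n = D := by
  rw [(commute_par_of_mem_epar_zero hD).eq, mul_assoc, par_mul_par, mul_one]

lemma sbL_eq_lie_of_left_even {D : E n} (hD : D ∈ epar n 0) (F : E n) : sbL n D F = ⁅D, F⁆ := by
  change D * F - (2 : ℂ)⁻¹ • ((F + par n * F * par n) * D +
    (F - par n * F * par n) * (par n * D * par n)) = ⁅D, F⁆
  rw [par_mul_mul_par_of_mem_epar_zero hD, ← add_mul, add_add_sub_cancel, Ring.lie_def, add_mul,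
    ← two_smul ℂ, inv_smul_smul₀ two_ne_zero]

lemma sbL_eq_lie_of_right_even (D : E n) {F : E n} (hF : F ∈ epar n 0) : sbL n D F = ⁅D, F⁆ := by
  change D * F - (2 : ℂ)⁻¹ • ((F + par n * F * par n) * D +
    (F - par n * F * par n) * (par n * D * par n)) = ⁅D, F⁆
  rw [par_mul_mul_par_of_mem_epar_zero hF, sub_self, zero_mul, add_zero, Ring.lie_def, add_mul,
    ← two_smul ℂ, inv_smul_smul₀ two_ne_zero]

end Parity

section Algebras

variable {n : ℕ} {t : CT}

attribute [local instance] LieRing.ofAssociativeRing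

/-- The operator `τ` for which `L = {τ ∑ fᵢ∂ᵢ}`: multiplication by `1 − x₁⋯x_n` for `S̃(n)` and
the identity for the other families. -/
def CT.twist (t : CT) (n : ℕ) : E n := if t = .St then mulOp n (oneM n) else 1

/-- The coefficient tuples `(f₁,…,f_n)` for which `τ ∑ fᵢ∂ᵢ` lies in `L`, where `τ` is
`CT.twist`. It is meaningful for `W(n)`, `S(n)` and `S̃(n)` only. -/
def CT.coeffs (t : CT) (n : ℕ) : Submodule ℂ (Fin n → Lambda n) :=
  if t = .W then ⊤ else divFree n

lemma Wmap_oneMScale (F : Fin n → Lambda n) :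
    Wmap n (oneMScale n F) = mulOp n (oneM n) * Wmap n F := by
  change ∑ i, mulOp n (mulOp n (oneM n) (F i)) * pd n i =
    mulOp n (oneM n) * ∑ i, mulOp n (F i) * pd n i
  simp only [mulOp_mulOp_apply, Finset.mul_sum, mul_assoc]

lemma mem_algebra_iff (ht : t ≠ .H) {x : E n} :
    x ∈ t.algebra n ↔ ∃ F ∈ t.coeffs n, t.twist n * Wmap n F = x := by
  cases t with
  | W => simp [CT.algebra, CT.coeffs, CT.twist, Wn]
  | S => simp [CT.algebra, CT.coeffs, CT.twist, Sn]
  | St => simp [CT.algebra, CT.coeffs, CT.twist, Stn, Wmap_oneMScale]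
  | H => exact absurd rfl ht

lemma matUnit_lie_twist (i j : Fin n) :
    ⁅(matUnit i j : E n), t.twist n⁆ =
      if t = .St then -mulOp n (matUnit i j (omegaTop n)) else 0 := by
  rw [CT.twist]
  split_ifs
  · rw [matUnit_lie_mulOp, oneM, map_sub, matUnit_apply_mono_empty, zero_sub]
    exact map_neg (mulOp n) _
  · rw [Ring.lie_def, mul_one, one_mul, sub_self]

lemma matUnit_lie_twist_mul {i j : Fin n} (hij : i ≠ j) (D : E n) :
    ⁅(matUnit i j : E n), t.twist n * D⁆ = t.twist n * ⁅(matUnit i j : E n), D⁆ := by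
  rw [lie_mul_right, matUnit_lie_twist, matUnit_omegaTop hij]
  simp

lemma mulOp_oneM_eq : mulOp n (oneM n) = 1 - mulOp n (omegaTop n) := by
  rw [oneM, map_sub, mulOp_mono_empty]

lemma twist_mul_matUnit (i j : Fin n) : t.twist n * matUnit i j = matUnit i j := by
  have hω : mulOp n (omegaTop n) * xOp i = 0 := LinearMap.ext fun g => by
    rw [Module.End.mul_apply, mulOp_omegaTop_apply, xOp_apply, if_neg (Finset.notMem_empty i),
      zero_smul, LinearMap.zero_apply]
  rw [CT.twist]
  split_ifs
  · rw [mulOp_oneM_eq, sub_mul, one_mul, matUnit, ← mul_assoc, hω, zero_mul, sub_zero]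
  · exact one_mul _

lemma twist_mem_epar (heven : t = .St → Even n) : t.twist n ∈ epar n 0 := by
  have hone : (mono n ∅ : Lambda n) ∈ lpar n 0 := by simpa using mono_mem_lpar (n := n) ∅
  rw [CT.twist]
  split_ifs with htSt
  · have hω : omegaTop n ∈ lpar n 0 := by
      have h := mono_mem_lpar (n := n) Finset.univ
      rwa [Finset.card_univ, Fintype.card_fin, (ZMod.natCast_eq_zero_iff_even).2 (heven htSt)] at h
    exact mulOp_mem_epar (sub_mem hone hω)
  · rw [← mulOp_mono_empty]
    exact mulOp_mem_epar hone

lemma twist_apply_singleton (hn : 2 ≤ n) (g : Lambda n) (k : Fin n) :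
    t.twist n g {k} = g {k} := by
  have hk : ({k} : Finset (Fin n)) ≠ Finset.univ := fun h => by
    have hcard := congrArg Finset.card h
    rw [Finset.card_singleton, Finset.card_univ, Fintype.card_fin] at hcard
    omega
  rw [CT.twist]
  split_ifs
  · rw [mulOp_oneM_eq, LinearMap.sub_apply, mulOp_omegaTop_apply]
    simp [omegaTop, mono, hk]
  · rfl

lemma Wmap_single (j : Fin n) (g : Lambda n) : Wmap n (Pi.single j g) = mulOp n g * pd n j := by
  change ∑ i, mulOp n (Pi.single (M := fun _ => Lambda n) j g i) * pd n i = _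
  rw [Finset.sum_eq_single_of_mem j (Finset.mem_univ j) fun i _ hij => by
    rw [Pi.single_eq_of_ne hij, map_zero, zero_mul], Pi.single_eq_same]

lemma divMap_single (j : Fin n) (g : Lambda n) : divMap n (Pi.single j g) = pd n j g := by
  change ∑ i, pd n i (Pi.single (M := fun _ => Lambda n) j g i) = _
  rw [Finset.sum_eq_single_of_mem j (Finset.mem_univ j) fun i _ hij => by
    rw [Pi.single_eq_of_ne hij, map_zero], Pi.single_eq_same]

lemma pd_mono_singleton (i k : Fin n) :
    pd n i (mono n {k}) = if i = k then mono n ∅ else 0 := by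
  have h := LinearMap.congr_fun (pd_mul_xOp_add i k) (mono n ∅)
  have hpd : pd n i (mono n ∅) = 0 := by
    funext U
    simp [pd_apply, mono]
  rw [LinearMap.add_apply, Module.End.mul_apply, Module.End.mul_apply, hpd, map_zero, add_zero, xOp,
    mulOp_apply_mono_empty] at h
  rw [h]
  split_ifs <;> rfl

lemma Wmap_apply_mono_singleton (F : Fin n → Lambda n) (k : Fin n) :
    Wmap n F (mono n {k}) = F k := by
  change (∑ i, mulOp n (F i) * pd n i) (mono n {k}) = F k
  simp only [LinearMap.sum_apply, Module.End.mul_apply, pd_mono_singleton, apply_ite, map_zero,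
    mulOp_apply_mono_empty, Finset.sum_ite_eq', Finset.mem_univ, if_true]

lemma Wmap_injective : Function.Injective (Wmap n) := fun F G h => funext fun k => by
  rw [← Wmap_apply_mono_singleton F, h, Wmap_apply_mono_singleton]

lemma divMap_apply_empty (F : Fin n → Lambda n) : divMap n F ∅ = ∑ k, F k {k} := by
  change (∑ k, pd n k (F k)) ∅ = _
  simp [Finset.sum_apply, pd_apply, insertSign, msign]

lemma matUnit_eq_Wmap_single (i j : Fin n) :
    matUnit i j = Wmap n (Pi.single j (mono n {i})) :=
  (Wmap_single j _).symm

lemma matUnit_mem_algebra (ht : t ≠ .H) {i j : Fin n} (hij : i ≠ j) :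
    matUnit i j ∈ t.algebra n := by
  refine (mem_algebra_iff ht).2 ⟨Pi.single j (mono n {i}), ?_, ?_⟩
  · rw [CT.coeffs]
    split_ifs
    · trivial
    · rw [divFree, LinearMap.mem_ker, divMap_single, pd_mono_singleton, if_neg hij.symm]
  · rw [← matUnit_eq_Wmap_single, twist_mul_matUnit]

lemma matUnit_sub_matUnit_mem_algebra (ht : t ≠ .H) (i j : Fin n) :
    matUnit i i - matUnit j j ∈ t.algebra n := by
  refine (mem_algebra_iff ht).2 ⟨Pi.single i (mono n {i}) - Pi.single j (mono n {j}), ?_, ?_⟩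
  · rw [CT.coeffs]
    split_ifs
    · trivial
    · rw [divFree, LinearMap.mem_ker, map_sub, divMap_single, divMap_single, pd_mono_singleton,
        pd_mono_singleton, if_pos rfl, if_pos rfl, sub_self]
  · rw [map_sub, ← matUnit_eq_Wmap_single, ← matUnit_eq_Wmap_single, mul_sub, twist_mul_matUnit,
      twist_mul_matUnit]

lemma lie_matUnit_mem_algebra (ht : t ≠ .H) {x : E n} (hx : x ∈ t.algebra n) {i j : Fin n}
    (hij : i ≠ j) : ⁅x, (matUnit i j : E n)⁆ ∈ t.algebra n := by
  obtain ⟨F, hF, rfl⟩ := (mem_algebra_iff ht).1 hx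
  rw [← lie_skew, neg_mem_iff, matUnit_lie_twist_mul hij, matUnit_lie_Wmap]
  refine (mem_algebra_iff ht).2 ⟨_, ?_, rfl⟩
  rw [CT.coeffs] at hF ⊢
  split_ifs at hF ⊢
  · trivial
  · exact matUnitAct_mem_divFree i j hF

end Algebras

section Weights

variable {n : ℕ} {t : CT}

attribute [local instance] LieRing.ofAssociativeRing

/-- The coefficient of `x_k` in `D(x_k)`; on the diagonal operators it is the coordinate along
`x_k ∂_k`. -/
def diagCoeff (k : Fin n) : E n →ₗ[ℂ] ℂ :=
  LinearMap.proj {k} ∘ₗ LinearMap.applyₗ (mono n {k})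

lemma diagCoeff_matUnit_self (k l : Fin n) :
    diagCoeff k (matUnit l l) = if k = l then 1 else 0 := by
  change matUnit l l (mono n {k}) {k} = _
  rw [matUnit_self_apply]
  simp [mono, eq_comm]

lemma eq_sum_diagCoeff {h : E n} (hh : h ∈ diagSpan n) :
    h = ∑ k, diagCoeff k h • matUnit k k := by
  induction hh using Submodule.span_induction with
  | mem x hx =>
    obtain ⟨l, rfl⟩ := hx
    change matUnit l l = ∑ k, diagCoeff k (matUnit l l) • matUnit k k
    simp [diagCoeff_matUnit_self]
  | zero => simp
  | add x y _ _ hx hy =>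
    conv_lhs => rw [hx, hy]
    simp [add_smul, Finset.sum_add_distrib]
  | smul c x _ hx =>
    conv_lhs => rw [hx]
    simp [mul_smul, Finset.smul_sum]

lemma matUnit_self_mem_diagSpan (k : Fin n) : matUnit k k ∈ diagSpan n :=
  Submodule.subset_span ⟨k, rfl⟩

lemma diagSpan_le_epar : diagSpan n ≤ epar n 0 := by
  refine Submodule.span_le.2 ?_
  rintro _ ⟨k, rfl⟩
  exact matUnit_mem_epar k k

lemma lie_eq_sum_of_mem_diagSpan {h : E n} (hh : h ∈ diagSpan n) (D : E n) :
    ⁅h, D⁆ = ∑ k, diagCoeff k h • ⁅(matUnit k k : E n), D⁆ := by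
  conv_lhs => rw [eq_sum_diagCoeff hh]
  rw [sum_lie]
  exact Finset.sum_congr rfl fun k _ => smul_lie (diagCoeff k h) (matUnit k k) D

lemma lie_matUnit_of_mem_diagSpan {h : E n} (hh : h ∈ diagSpan n) (i j : Fin n) :
    ⁅h, (matUnit i j : E n)⁆ = (diagCoeff i h - diagCoeff j h) • matUnit i j := by
  rw [lie_eq_sum_of_mem_diagSpan hh]
  refine Eq.trans ?_ (sub_smul _ _ (matUnit i j)).symm
  simp [matUnit_lie_matUnit, smul_sub]

lemma lie_eq_zero_of_mem_diagSpan {h h' : E n} (hh : h ∈ diagSpan n) (hh' : h' ∈ diagSpan n) :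
    ⁅h, h'⁆ = 0 := by
  rw [eq_sum_diagCoeff hh', lie_sum]
  refine Finset.sum_eq_zero fun k _ => (lie_smul _ h (matUnit k k)).trans ?_
  rw [lie_matUnit_of_mem_diagSpan hh, sub_self, zero_smul, smul_zero]

lemma lie_Wmap_of_mem_diagSpan {h : E n} (hh : h ∈ diagSpan n) (F : Fin n → Lambda n) :
    ⁅h, Wmap n F⁆ =
      Wmap n fun m S => (∑ k ∈ S, diagCoeff k h - diagCoeff m h) * F m S := by
  simp only [lie_eq_sum_of_mem_diagSpan hh, matUnit_lie_Wmap, ← map_smul, ← map_sum]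
  congr 1
  funext m S
  have hact (k : Fin n) : matUnitAct k k F m S =
      (if k ∈ S then F m S else 0) - if m = k then F m S else 0 := by
    rw [matUnitAct, Pi.sub_apply, matUnit_self_apply]
    congr 1
    split_ifs with hmk
    · rw [hmk]
    · rfl
  simp [Finset.sum_apply, hact, mul_sub, sub_mul, Finset.sum_mul]

lemma sum_diagCoeff_eq_zero (hn : 2 ≤ n) (ht : t ≠ .H) (htW : t ≠ .W) {h : E n}
    (hh : h ∈ t.algebra n) : ∑ k, diagCoeff k h = 0 := by
  obtain ⟨F, hF, rfl⟩ := (mem_algebra_iff ht).1 hh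
  rw [CT.coeffs, if_neg htW, divFree, LinearMap.mem_ker] at hF
  change ∑ k, t.twist n (Wmap n F (mono n {k})) {k} = 0
  simp only [Wmap_apply_mono_singleton, twist_apply_singleton hn, ← divMap_apply_empty, hF,
    Pi.zero_apply]

lemma cartan_lie_twist (hn : 2 ≤ n) {h : E n} (hh : h ∈ t.cartan n) : ⁅h, t.twist n⁆ = 0 := by
  rw [lie_eq_sum_of_mem_diagSpan hh.2]
  simp only [matUnit_lie_twist, matUnit_self_omegaTop]
  split_ifs with htSt
  · subst htSt
    rw [← Finset.sum_smul, sum_diagCoeff_eq_zero hn (by decide) (by decide) hh.1, zero_smul]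
  · simp

/-- The linear functional `x_k ∂_k ↦ 1`, `x_l ∂_l ↦ 0` for `l ≠ k`, restricted to `H_L`. -/
def cartanCoeff (t : CT) (k : Fin n) : Module.Dual ℂ (t.cartan n) :=
  diagCoeff k ∘ₗ (t.cartan n).subtype

/-- The weight of `x_i ∂_j`. -/
def root (t : CT) (i j : Fin n) : Module.Dual ℂ (t.cartan n) := cartanCoeff t i - cartanCoeff t j

/-- The weight of `x_S ∂_m`. -/
def monoWeight (t : CT) (m : Fin n) (S : Finset (Fin n)) : Module.Dual ℂ (t.cartan n) :=
  ∑ k ∈ S, cartanCoeff t k - cartanCoeff t m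

/-- The space `L_χ ∩ L_α` of elements that are homogeneous for both the weight and the
`ℤ₂`-grading. -/
def homWtsp (t : CT) (n : ℕ) (χ : Module.Dual ℂ (t.cartan n)) (α : ZMod 2) :
    Submodule ℂ (E n) :=
  wtsp t n (t.algebra n) χ ⊓ epar n α

open scoped Classical in
/-- The part of the coefficient tuple `F` carried by the monomials `x_S ∂_m` with weight `p.1` and
parity `p.2`. -/
def component (t : CT) (p : Module.Dual ℂ (t.cartan n) × ZMod 2) (F : Fin n → Lambda n) :
    Fin n → Lambda n :=
  fun m S => if (monoWeight t m S, (S.card : ZMod 2) + 1) = p then F m S else 0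

open scoped Classical in
lemma sum_component (t : CT) (F : Fin n → Lambda n) :
    ∑ p ∈ Finset.univ.image fun mS : Fin n × Finset (Fin n) =>
      (monoWeight t mS.1 mS.2, (mS.2.card : ZMod 2) + 1), component t p F = F := by
  funext m S
  simp only [Finset.sum_apply, component]
  rw [Finset.sum_ite_eq, if_pos (Finset.mem_image_of_mem _ (Finset.mem_univ (m, S)))]

lemma component_mem_coeffs (p : Module.Dual ℂ (t.cartan n) × ZMod 2) {F : Fin n → Lambda n}
    (hF : F ∈ t.coeffs n) : component t p F ∈ t.coeffs n := by
  rw [CT.coeffs] at hF ⊢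
  split_ifs at hF ⊢
  · trivial
  rw [divFree, LinearMap.mem_ker] at hF ⊢
  funext S
  classical
  -- `∂_i` removes `x_i` from a monomial, so the weight and parity of `x_i x_S ∂_i` do not
  -- depend on `i ∉ S`.
  have hcomp (i : Fin n) : pd n i (component t p F i) S =
      if (∑ k ∈ S, cartanCoeff t k, (S.card : ZMod 2)) = p then pd n i (F i) S else 0 := by
    simp only [pd_apply, component, monoWeight]
    by_cases hi : i ∈ S
    · simp [hi]
    · simp [hi, Finset.sum_insert, Finset.card_insert_of_notMem, add_assoc,
        CharTwo.add_self_eq_zero]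
  change (∑ i, pd n i (component t p F i)) S = 0
  rw [Finset.sum_apply, Finset.sum_congr rfl fun i _ => hcomp i]
  split_ifs
  · rw [← Finset.sum_apply]
    exact congrFun hF S
  · exact Finset.sum_const_zero

lemma Wmap_mem_epar {α : ZMod 2} {F : Fin n → Lambda n} (hF : ∀ m, F m ∈ lpar n (α + 1)) :
    Wmap n F ∈ epar n α := by
  refine Submodule.sum_mem (epar n α) fun m _ => ?_
  have h := mul_mem_epar (mulOp_mem_epar (hF m)) (pd_mem_epar m)
  rwa [add_assoc, CharTwo.add_self_eq_zero, add_zero] at h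

lemma sbL_cartan_eq_lie (h : t.cartan n) (D : E n) : sbL n h D = ⁅(h : E n), D⁆ :=
  sbL_eq_lie_of_left_even (diagSpan_le_epar h.2.2) D

lemma twist_mul_component_mem_homWtsp (hn : 2 ≤ n) (ht : t ≠ .H) (heven : t = .St → Even n)
    (p : Module.Dual ℂ (t.cartan n) × ZMod 2) {F : Fin n → Lambda n} (hF : F ∈ t.coeffs n) :
    t.twist n * Wmap n (component t p F) ∈ homWtsp t n p.1 p.2 := by
  refine ⟨⟨(mem_algebra_iff ht).2 ⟨_, component_mem_coeffs p hF, rfl⟩, fun h => ?_⟩, ?_⟩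
  · have hweight : (fun m S => (∑ k ∈ S, diagCoeff k (h : E n) - diagCoeff m (h : E n)) *
        component t p F m S) = p.1 h • component t p F := by
      funext m S
      simp only [component, Pi.smul_apply, smul_eq_mul]
      split_ifs with hp
      · rw [← hp]
        simp [monoWeight, cartanCoeff, LinearMap.sum_apply]
      · rw [mul_zero, mul_zero]
    rw [sbL_cartan_eq_lie, lie_mul_right, cartan_lie_twist hn h.2, zero_mul, zero_add,
      lie_Wmap_of_mem_diagSpan h.2.2, hweight, map_smul, mul_smul_comm]
  · have h := mul_mem_epar (twist_mem_epar heven) (Wmap_mem_epar (F := component t p F)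
      (α := p.2) fun m S hS => if_neg ?_)
    · rwa [zero_add] at h
    · rintro rfl
      exact hS (by rw [add_assoc, CharTwo.add_self_eq_zero, add_zero])

lemma algebra_le_of_homWtsp_le (hn : 2 ≤ n) (ht : t ≠ .H) (heven : t = .St → Even n)
    {M : Submodule ℂ (E n)} (hM : ∀ χ α, homWtsp t n χ α ≤ M) : t.algebra n ≤ M := by
  classical
  intro x hx
  obtain ⟨F, hF, rfl⟩ := (mem_algebra_iff ht).1 hx
  rw [← sum_component t F, map_sum, Finset.mul_sum]
  exact M.sum_mem fun p _ => hM p.1 p.2 (twist_mul_component_mem_homWtsp hn ht heven p hF)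

lemma cartan_mem_homWtsp (h : t.cartan n) : (h : E n) ∈ homWtsp t n 0 0 :=
  ⟨⟨h.2.1, fun k => by
    rw [sbL_cartan_eq_lie, lie_eq_zero_of_mem_diagSpan k.2.2 h.2.2, LinearMap.zero_apply,
      zero_smul]⟩, diagSpan_le_epar h.2.2⟩

lemma lie_matUnit (h : t.cartan n) (i j : Fin n) :
    ⁅(h : E n), (matUnit i j : E n)⁆ = root t i j h • matUnit i j :=
  lie_matUnit_of_mem_diagSpan h.2.2 i j

lemma matUnit_mem_homWtsp (ht : t ≠ .H) {i j : Fin n} (hij : i ≠ j) :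
    matUnit i j ∈ homWtsp t n (root t i j) 0 :=
  ⟨⟨matUnit_mem_algebra ht hij, fun h => by rw [sbL_cartan_eq_lie, lie_matUnit]⟩,
    matUnit_mem_epar i j⟩

lemma cartan_lie_of_mem_wtsp {M : Submodule ℂ (E n)} {χ : Module.Dual ℂ (t.cartan n)} {x : E n}
    (hx : x ∈ wtsp t n M χ) (h : t.cartan n) : ⁅(h : E n), x⁆ = χ h • x := by
  rw [← sbL_cartan_eq_lie, hx.2]

lemma lie_matUnit_mem_homWtsp (ht : t ≠ .H) {χ : Module.Dual ℂ (t.cartan n)} {α : ZMod 2}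
    {x : E n} (hx : x ∈ homWtsp t n χ α) {i j : Fin n} (hij : i ≠ j) :
    ⁅x, (matUnit i j : E n)⁆ ∈ homWtsp t n (χ + root t i j) α := by
  refine ⟨⟨lie_matUnit_mem_algebra ht hx.1.1 hij, fun h => ?_⟩, ?_⟩
  · rw [sbL_cartan_eq_lie, leibniz_lie, cartan_lie_of_mem_wtsp hx.1, lie_matUnit,
      smul_lie (χ h) x (matUnit i j), lie_smul (root t i j h) x (matUnit i j), ← add_smul,
      LinearMap.add_apply]
  · rw [Ring.lie_def]
    refine Submodule.sub_mem _ ?_ ?_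
    · simpa using mul_mem_epar hx.2 (matUnit_mem_epar i j)
    · simpa using mul_mem_epar (matUnit_mem_epar i j) hx.2

end Weights

section Centralizer

variable {n : ℕ} {t : CT}

attribute [local instance] LieRing.ofAssociativeRing

/-- The element `x_i ∂_i - x_j ∂_j` of `H_L`. -/
def coroot (ht : t ≠ .H) (i j : Fin n) : t.cartan n :=
  ⟨matUnit i i - matUnit j j, matUnit_sub_matUnit_mem_algebra ht i j,
    sub_mem (matUnit_self_mem_diagSpan i) (matUnit_self_mem_diagSpan j)⟩

lemma cartanCoeff_coroot (ht : t ≠ .H) (k i j : Fin n) :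
    cartanCoeff t k (coroot ht i j) = (if k = i then 1 else 0) - if k = j then 1 else 0 := by
  change diagCoeff k (matUnit i i - matUnit j j) = _
  rw [map_sub, diagCoeff_matUnit_self, diagCoeff_matUnit_self]

lemma root_coroot (ht : t ≠ .H) (k l i j : Fin n) : root t k l (coroot ht i j) =
    (if k = i then 1 else 0) - (if k = j then 1 else 0) -
      ((if l = i then 1 else 0) - if l = j then 1 else 0) := by
  rw [root, LinearMap.sub_apply, cartanCoeff_coroot, cartanCoeff_coroot]

lemma matUnit_lie_matUnit_symm (ht : t ≠ .H) (i j : Fin n) :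
    ⁅(matUnit i j : E n), matUnit j i⁆ = coroot ht i j := by
  rw [matUnit_lie_matUnit, if_pos rfl, if_pos rfl]
  rfl

lemma exists_ne_ne_ne (hn : 4 ≤ n) (i j : Fin n) :
    ∃ k l : Fin n, k ≠ i ∧ k ≠ j ∧ l ≠ i ∧ l ≠ j ∧ k ≠ l := by
  have hcard : 1 < (({i, j} : Finset (Fin n))ᶜ).card := by
    have h := Finset.card_le_two (a := i) (b := j)
    rw [Finset.card_compl, Fintype.card_fin]
    omega
  obtain ⟨k, hk, l, hl, hkl⟩ := Finset.one_lt_card.1 hcard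
  simp only [Finset.mem_compl, Finset.mem_insert, Finset.mem_singleton, not_or] at hk hl
  exact ⟨k, l, hk.1, hk.2, hl.1, hl.2, hkl⟩

lemma commute_matUnit_of_forall_root_ne_zero (hn : 4 ≤ n) (ht : t ≠ .H)
    {μ : Module.Dual ℂ (t.cartan n)} {v : E n}
    (hv : ∀ i j, i ≠ j → ∀ h, μ h = 0 → root t i j h ≠ 0 → Commute v (matUnit i j))
    {i j : Fin n} (hij : i ≠ j) : Commute v (matUnit i j) := by
  obtain ⟨k, l, hki, hkj, hli, hlj, hkl⟩ := exists_ne_ne_ne hn i j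
  by_cases hμ : μ (coroot ht k l) = 0
  · have hik : Commute v (matUnit i k) := hv i k hki.symm _ hμ <| by
      rw [root_coroot]; simp [hki.symm, hli.symm, hkl]
    have hkj : Commute v (matUnit k j) := hv k j hkj _ hμ <| by
      rw [root_coroot]; simp [hkj.symm, hlj.symm, hkl]
    have hbracket : ⁅(matUnit i k : E n), matUnit k j⁆ = matUnit i j := by
      rw [matUnit_lie_matUnit, if_pos rfl, if_neg hij, sub_zero]
    exact hbracket ▸ commute_lie hik hkj
  · -- The multiple of `coroot k l` is chosen to bring `coroot i j` into `ker μ`.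
    set c := μ (coroot ht i j) / μ (coroot ht k l) with hc
    have heval (ν : Module.Dual ℂ (t.cartan n)) : ν (coroot ht i j - c • coroot ht k l) =
        ν (coroot ht i j) - c * ν (coroot ht k l) :=
      (map_sub ν _ _).trans (congrArg _ (map_smul ν _ _))
    refine hv i j hij (coroot ht i j - c • coroot ht k l) ?_ ?_
    · rw [heval, hc, div_mul_cancel₀ _ hμ, sub_self]
    · rw [heval, root_coroot, root_coroot]
      simp [hij, hij.symm, hki.symm, hli.symm, hkj.symm, hlj.symm]

lemma eq_sum_smul_coroot (hn : 2 ≤ n) (ht : t ≠ .H) (htW : t ≠ .W) (h : t.cartan n)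
    (l : Fin n) : h = ∑ k, cartanCoeff t k h • coroot ht k l := by
  apply Subtype.ext
  have htrace : ∑ k, diagCoeff k (h : E n) = 0 := sum_diagCoeff_eq_zero hn ht htW h.2.1
  rw [AddSubmonoidClass.coe_finsetSum]
  change (h : E n) = ∑ k, diagCoeff k (h : E n) • (matUnit k k - matUnit l l)
  simp only [smul_sub, Finset.sum_sub_distrib, ← Finset.sum_smul, htrace]
  rw [zero_smul, sub_zero]
  exact eq_sum_diagCoeff h.2.2

lemma exists_eq_monoWeight_of_mem_wtsp_W {μ : Module.Dual ℂ (CT.W.cartan n)} {v : E n}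
    (hv : v ∈ wtsp .W n (CT.W.algebra n) μ) (hv0 : v ≠ 0) :
    ∃ (m : Fin n) (S : Finset (Fin n)), μ = monoWeight .W m S := by
  obtain ⟨F, rfl⟩ : ∃ F, Wmap n F = v := hv.1
  have hF : ∃ m S, F m S ≠ 0 := by
    by_contra! hF
    exact hv0 (by rw [show F = 0 from funext₂ hF, map_zero])
  obtain ⟨m, S, hmS⟩ := hF
  refine ⟨m, S, LinearMap.ext fun h => ?_⟩
  have hlie := cartan_lie_of_mem_wtsp hv h
  rw [lie_Wmap_of_mem_diagSpan h.2.2, ← map_smul] at hlie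
  have hcoeff := congrFun₂ (Wmap_injective hlie) m S
  refine (mul_right_cancel₀ hmS hcoeff).symm.trans ?_
  simp [monoWeight, cartanCoeff, LinearMap.sum_apply]

/-- The element `x_k ∂_k` of the standard Cartan subalgebra of `W(n)`. -/
def cartanW (k : Fin n) : CT.W.cartan n :=
  ⟨matUnit k k, ⟨_, (matUnit_eq_Wmap_single k k).symm⟩, matUnit_self_mem_diagSpan k⟩

lemma monoWeight_cartanW (m k : Fin n) (S : Finset (Fin n)) :
    monoWeight .W m S (cartanW k) = (if k ∈ S then 1 else 0) - if m = k then 1 else 0 := by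
  have hcoeff (l : Fin n) : cartanCoeff .W l (cartanW k) = if l = k then 1 else 0 :=
    diagCoeff_matUnit_self l k
  simp [monoWeight, LinearMap.sum_apply, hcoeff]

lemma eq_sum_smul_cartanW (h : CT.W.cartan n) : h = ∑ k, cartanCoeff .W k h • cartanW k := by
  apply Subtype.ext
  rw [AddSubmonoidClass.coe_finsetSum]
  exact eq_sum_diagCoeff h.2.2

lemma weight_eq_zero_of_forall_coroot_W (hn : 2 ≤ n) {μ : Module.Dual ℂ (CT.W.cartan n)} {v : E n}
    (hv : v ∈ wtsp .W n (CT.W.algebra n) μ) (hv0 : v ≠ 0)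
    (hμ : ∀ i j, μ (coroot (t := .W) (by decide) i j) = 0) : μ = 0 := by
  obtain ⟨m, S, rfl⟩ := exists_eq_monoWeight_of_mem_wtsp_W hv hv0
  have hconst (k l : Fin n) : monoWeight .W m S (cartanW k) = monoWeight .W m S (cartanW l) :=
    sub_eq_zero.1 ((map_sub _ _ _).symm.trans (hμ k l))
  have : Nontrivial (Fin n) := Fin.nontrivial_iff_two_le.2 hn
  obtain ⟨l, hl⟩ := exists_ne m
  -- The common value lies in `{-1, 0}` by evaluation at `m` and in `{0, 1}` at `l ≠ m`.
  have hm : monoWeight .W m S (cartanW m) = 0 := by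
    have h := hconst m l
    rw [monoWeight_cartanW, monoWeight_cartanW, if_pos rfl, if_neg hl.symm] at h
    rw [monoWeight_cartanW, if_pos rfl]
    by_cases hmS : m ∈ S
    · rw [if_pos hmS, sub_self]
    · rw [if_neg hmS] at h
      split_ifs at h <;> norm_num at h
  refine LinearMap.ext fun h => ?_
  rw [eq_sum_smul_cartanW h, map_sum]
  exact Finset.sum_eq_zero fun k _ => by rw [map_smul, hconst k m, hm, smul_zero]

lemma weight_eq_zero_of_forall_coroot (hn : 2 ≤ n) (ht : t ≠ .H)
    {μ : Module.Dual ℂ (t.cartan n)} {v : E n} (hv : v ∈ wtsp t n (t.algebra n) μ) (hv0 : v ≠ 0)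
    (hμ : ∀ i j, μ (coroot ht i j) = 0) : μ = 0 := by
  by_cases htW : t = .W
  · subst htW
    exact weight_eq_zero_of_forall_coroot_W hn hv hv0 hμ
  · refine LinearMap.ext fun h => ?_
    rw [eq_sum_smul_coroot hn ht htW h ⟨0, by omega⟩, map_sum]
    exact Finset.sum_eq_zero fun k _ => by rw [map_smul, hμ, smul_zero]

lemma eq_zero_of_commute_matUnit (hn : 4 ≤ n) (ht : t ≠ .H) {μ : Module.Dual ℂ (t.cartan n)}
    (hμ : μ ≠ 0) {v : E n} (hv : v ∈ wtsp t n (t.algebra n) μ)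
    (hcomm : ∀ i j, i ≠ j → ∀ h, μ h = 0 → root t i j h ≠ 0 → Commute v (matUnit i j)) :
    v = 0 := by
  by_contra hv0
  refine hμ (weight_eq_zero_of_forall_coroot (by omega) ht hv hv0 fun i j => ?_)
  obtain rfl | hij := eq_or_ne i j
  · rw [show coroot ht i i = 0 from Subtype.ext (sub_self (matUnit i i)), map_zero]
  have hcoroot : Commute v (coroot ht i j) := by
    rw [← matUnit_lie_matUnit_symm ht i j]
    exact commute_lie (commute_matUnit_of_forall_root_ne_zero hn ht hcomm hij)
      (commute_matUnit_of_forall_root_ne_zero hn ht hcomm hij.symm)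
  have hsmul := cartan_lie_of_mem_wtsp hv (coroot ht i j)
  rw [commute_iff_lie_eq.1 hcoroot.symm] at hsmul
  exact (smul_eq_zero.1 hsmul.symm).resolve_right hv0

end Centralizer

section Biderivation

variable {n : ℕ} {t : CT} {pf : ZMod 2} {f : E n →ₗ[ℂ] E n →ₗ[ℂ] E n}
  {ε ζ η : Module.Dual ℂ (t.cartan n)} {α β : ZMod 2} {x z : E n}

attribute [local instance] LieRing.ofAssociativeRing

lemma apply_apply_cartan_mem_wtsp (hw : t.HasWeight n f ε) (hx : x ∈ homWtsp t n ζ α)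
    (k : t.cartan n) : f x k ∈ wtsp t n (t.algebra n) (ε + ζ) := by
  simpa using hw ζ 0 x hx.1 k (cartan_mem_homWtsp k).1

lemma smul_apply_eq_neg_sbL_apply_cartan_right (hf : IsSuperBider n (t.algebra n) pf f)
    (hw : t.HasWeight n f ε) (hx : x ∈ homWtsp t n ζ α) (hz : z ∈ homWtsp t n η β)
    (k : t.cartan n) : (ε + ζ) k • f x z = -sbL n (f x k) z := by
  have hk := cartan_mem_homWtsp k
  have h := hf.eq2 α 0 β x ⟨hx.1.1, hx.2⟩ k ⟨hk.1.1, hk.2⟩ z ⟨hz.1.1, hz.2⟩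
  rw [hz.1.2 k, (hw ζ η x hx.1 z hz.1).2 k, map_smul, mul_zero, sgn, ZMod.val_zero, pow_zero,
    one_smul, LinearMap.add_apply (ε + ζ), add_smul, ← add_assoc, right_eq_add] at h
  exact eq_neg_of_add_eq_zero_right h

lemma smul_apply_eq_neg_sgn_smul_sbL_apply_cartan_left (hf : IsSuperBider n (t.algebra n) pf f)
    (hw : t.HasWeight n f ε) (hx : x ∈ homWtsp t n ζ α) (hz : z ∈ homWtsp t n η β)
    (k : t.cartan n) : (ε + η) k • f x z = -(sgn (α * β) • sbL n (f k z) x) := by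
  have hk := cartan_mem_homWtsp k
  have h := hf.eq1 0 α β k ⟨hk.1.1, hk.2⟩ x ⟨hx.1.1, hx.2⟩ z ⟨hz.1.1, hz.2⟩
  rw [hx.1.2 k, (hw ζ η x hx.1 z hz.1).2 k, map_smul, LinearMap.smul_apply, zero_mul, sgn,
    ZMod.val_zero, pow_zero, one_smul, add_right_comm ε ζ η, LinearMap.add_apply (ε + η),
    add_smul, add_right_comm, right_eq_add] at h
  exact eq_neg_of_add_eq_zero_left h

lemma apply_eq_zero_of_apply_cartan_right_eq_zero (hf : IsSuperBider n (t.algebra n) pf f)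
    (hw : t.HasWeight n f ε) (hx : x ∈ homWtsp t n ζ α) (hz : z ∈ homWtsp t n η β)
    {k : t.cartan n} (hk : (ε + ζ) k ≠ 0) (h : f x k = 0) : f x z = 0 := by
  have hsmul := smul_apply_eq_neg_sbL_apply_cartan_right hf hw hx hz k
  rw [h, map_zero, LinearMap.zero_apply, neg_zero] at hsmul
  exact (smul_eq_zero.1 hsmul).resolve_left hk

lemma apply_eq_zero_of_apply_cartan_left_eq_zero (hf : IsSuperBider n (t.algebra n) pf f)
    (hw : t.HasWeight n f ε) (hx : x ∈ homWtsp t n ζ α) (hz : z ∈ homWtsp t n η β)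
    {k : t.cartan n} (hk : (ε + η) k ≠ 0) (h : f k z = 0) : f x z = 0 := by
  have hsmul := smul_apply_eq_neg_sgn_smul_sbL_apply_cartan_left hf hw hx hz k
  rw [h, map_zero, LinearMap.zero_apply, smul_zero, neg_zero] at hsmul
  exact (smul_eq_zero.1 hsmul).resolve_left hk

lemma smul_apply_cartan_comm (hf : IsSuperBider n (t.algebra n) pf f)
    (hw : t.HasWeight n f ε) (hx : x ∈ homWtsp t n ζ α) (h k : t.cartan n) :
    (ε + ζ) k • f x h = (ε + ζ) h • f x k := by
  rw [smul_apply_eq_neg_sbL_apply_cartan_right hf hw hx (cartan_mem_homWtsp h),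
    sbL_eq_lie_of_right_even (f x k) (cartan_mem_homWtsp h).2, lie_skew,
    cartan_lie_of_mem_wtsp (apply_apply_cartan_mem_wtsp hw hx k)]

lemma apply_cartan_self_eq_zero (hn : 4 ≤ n) (ht : t ≠ .H)
    (hf : IsSuperBider n (t.algebra n) pf f) (hw : t.HasWeight n f ε) {h : t.cartan n}
    (hh : ε h ≠ 0) : f h h = 0 := by
  have hhom := cartan_mem_homWtsp h
  have hwt : f h h ∈ wtsp t n (t.algebra n) ε := by
    simpa using apply_apply_cartan_mem_wtsp hw hhom h
  refine eq_zero_of_commute_matUnit hn ht (fun hε => hh (by rw [hε, LinearMap.zero_apply])) hwt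
    fun i j hij k hεk hk => ?_
  have he : matUnit i j ∈ homWtsp t n (root t i j) 0 := matUnit_mem_homWtsp ht hij
  have hh0 : (ε + 0) h ≠ 0 := by rwa [add_zero]
  have hhk : f h k = 0 := by
    have hcomm := smul_apply_cartan_comm hf hw hhom k h
    rw [add_zero, hεk, zero_smul] at hcomm
    exact (smul_eq_zero.1 hcomm).resolve_left hh
  have hek : f (matUnit i j) k = 0 :=
    apply_eq_zero_of_apply_cartan_left_eq_zero hf hw he (cartan_mem_homWtsp k) hh0 hhk
  have heh : f (matUnit i j) h = 0 :=
    apply_eq_zero_of_apply_cartan_right_eq_zero hf hw he hhom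
      (by rwa [LinearMap.add_apply, hεk, zero_add]) hek
  have hsbL := smul_apply_eq_neg_sgn_smul_sbL_apply_cartan_left hf hw he hhom h
  rw [heh, smul_zero, mul_zero, sgn, ZMod.val_zero, pow_zero, one_smul,
    sbL_eq_lie_of_right_even (f h h) he.2] at hsbL
  exact commute_iff_lie_eq.2 (neg_eq_zero.1 hsbL.symm)

lemma apply_cartan_cartan_eq_zero (hn : 4 ≤ n) (ht : t ≠ .H)
    (hf : IsSuperBider n (t.algebra n) pf f) (hw : t.HasWeight n f ε) {h : t.cartan n}
    (hh : ε h ≠ 0) (k : t.cartan n) : f h k = 0 :=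
  apply_eq_zero_of_apply_cartan_right_eq_zero hf hw (cartan_mem_homWtsp h) (cartan_mem_homWtsp k)
    (by rwa [add_zero]) (apply_cartan_self_eq_zero hn ht hf hw hh)

lemma apply_cartan_right_eq_zero (hn : 4 ≤ n) (ht : t ≠ .H)
    (hf : IsSuperBider n (t.algebra n) pf f) (hw : t.HasWeight n f ε) (hε : ε ≠ 0)
    (hx : x ∈ homWtsp t n ζ α) (k : t.cartan n) : f x k = 0 := by
  obtain ⟨h, hh⟩ := DFunLike.ne_iff.1 hε
  exact apply_eq_zero_of_apply_cartan_left_eq_zero hf hw hx (cartan_mem_homWtsp k)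
    (by rwa [add_zero]) (apply_cartan_cartan_eq_zero hn ht hf hw hh k)

lemma apply_cartan_left_eq_zero (hn : 4 ≤ n) (ht : t ≠ .H)
    (hf : IsSuperBider n (t.algebra n) pf f) (hw : t.HasWeight n f ε) (hε : ε ≠ 0)
    (hz : z ∈ homWtsp t n η β) (k : t.cartan n) : f k z = 0 := by
  obtain ⟨h, hh⟩ := DFunLike.ne_iff.1 hε
  exact apply_eq_zero_of_apply_cartan_right_eq_zero hf hw (cartan_mem_homWtsp k) hz
    (by rwa [add_zero]) (apply_cartan_right_eq_zero hn ht hf hw hε (cartan_mem_homWtsp k) h)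

lemma apply_eq_zero_of_add_ne_zero_left (hn : 4 ≤ n) (ht : t ≠ .H)
    (hf : IsSuperBider n (t.algebra n) pf f) (hw : t.HasWeight n f ε) (hε : ε ≠ 0)
    (hx : x ∈ homWtsp t n ζ α) (hz : z ∈ homWtsp t n η β) (hζ : ε + ζ ≠ 0) : f x z = 0 := by
  obtain ⟨k, hk⟩ := DFunLike.ne_iff.1 hζ
  exact apply_eq_zero_of_apply_cartan_right_eq_zero hf hw hx hz hk
    (apply_cartan_right_eq_zero hn ht hf hw hε hx k)

lemma apply_eq_zero_of_add_ne_zero_right (hn : 4 ≤ n) (ht : t ≠ .H)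
    (hf : IsSuperBider n (t.algebra n) pf f) (hw : t.HasWeight n f ε) (hε : ε ≠ 0)
    (hx : x ∈ homWtsp t n ζ α) (hz : z ∈ homWtsp t n η β) (hη : ε + η ≠ 0) : f x z = 0 := by
  obtain ⟨k, hk⟩ := DFunLike.ne_iff.1 hη
  exact apply_eq_zero_of_apply_cartan_left_eq_zero hf hw hx hz hk
    (apply_cartan_left_eq_zero hn ht hf hw hε hz k)

lemma apply_eq_zero_of_mem_homWtsp_neg (hn : 4 ≤ n) (ht : t ≠ .H)
    (hf : IsSuperBider n (t.algebra n) pf f) (hw : t.HasWeight n f ε) (hε : ε ≠ 0)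
    (hx : x ∈ homWtsp t n (-ε) α) (hz : z ∈ homWtsp t n (-ε) β) : f x z = 0 := by
  have hwt : f x z ∈ wtsp t n (t.algebra n) (-ε) := by
    simpa using hw (-ε) (-ε) x hx.1 z hz.1
  refine eq_zero_of_commute_matUnit hn ht (neg_ne_zero.2 hε) hwt fun i j hij k hεk hk => ?_
  have he : matUnit i j ∈ homWtsp t n (root t i j) 0 := matUnit_mem_homWtsp ht hij
  have hxe := lie_matUnit_mem_homWtsp ht hx hij
  have hez : f (matUnit i j) z = 0 :=
    apply_eq_zero_of_add_ne_zero_left hn ht hf hw hε he hz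
      (DFunLike.ne_iff.2 ⟨k, by simpa [neg_eq_zero.1 hεk] using hk⟩)
  have hxez : f ⁅x, matUnit i j⁆ z = 0 :=
    apply_eq_zero_of_add_ne_zero_left hn ht hf hw hε hxe hz
      (DFunLike.ne_iff.2 ⟨k, by simpa using hk⟩)
  have hleib := hf.eq1 α 0 β x ⟨hx.1.1, hx.2⟩ _ ⟨he.1.1, he.2⟩ z ⟨hz.1.1, hz.2⟩
  rw [sbL_eq_lie_of_right_even x he.2, hxez, hez, map_zero, smul_zero, zero_add, zero_mul, sgn,
    ZMod.val_zero, pow_zero, one_smul, sbL_eq_lie_of_right_even (f x z) he.2] at hleib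
  exact commute_iff_lie_eq.2 hleib.symm

lemma apply_eq_zero_of_mem_homWtsp (hn : 4 ≤ n) (ht : t ≠ .H)
    (hf : IsSuperBider n (t.algebra n) pf f) (hw : t.HasWeight n f ε) (hε : ε ≠ 0)
    (hx : x ∈ homWtsp t n ζ α) (hz : z ∈ homWtsp t n η β) : f x z = 0 := by
  by_cases hζ : ε + ζ = 0
  swap
  · exact apply_eq_zero_of_add_ne_zero_left hn ht hf hw hε hx hz hζ
  by_cases hη : ε + η = 0
  swap
  · exact apply_eq_zero_of_add_ne_zero_right hn ht hf hw hε hx hz hη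
  obtain rfl := eq_neg_of_add_eq_zero_right hζ
  obtain rfl := eq_neg_of_add_eq_zero_right hη
  exact apply_eq_zero_of_mem_homWtsp_neg hn ht hf hw hε hx hz

end Biderivation

/-- For `L = W(n)`, `S(n)` or `S̃(n)` (`n` even), `n ≥ 4`, a
super-biderivation `f ∈ BDer(L)_ε` of nonzero weight `ε ∈ H_L^*` is the zero map. -/
theorem superBider_nonzero_weight_vanishes (n : ℕ) (hn : 4 ≤ n) (t : CT)
    (ht : t = CT.W ∨ t = CT.S ∨ (t = CT.St ∧ Even n))
    (pf : ZMod 2) (f : E n →ₗ[ℂ] E n →ₗ[ℂ] E n)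
    (hf : IsSuperBider n (t.algebra n) pf f)
    (eps : Module.Dual ℂ (t.cartan n)) (heps : eps ≠ 0)
    (hw : t.HasWeight n f eps) :
    ∀ x ∈ t.algebra n, ∀ y ∈ t.algebra n, f x y = 0 := by
  have htH : t ≠ .H := by rintro rfl; simp at ht
  have heven : t = .St → Even n := by rintro rfl; simpa using ht
  have hn2 : 2 ≤ n := by omega
  intro x hx y hy
  have hleft : t.algebra n ≤ LinearMap.ker (f.flip y) :=
    algebra_le_of_homWtsp_le hn2 htH heven fun ζ α x hx => by
      have hright : t.algebra n ≤ LinearMap.ker (f x) :=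
        algebra_le_of_homWtsp_le hn2 htH heven fun η β z hz =>
          apply_eq_zero_of_mem_homWtsp hn htH hf hw heps hx hz
      exact hright hy
  exact hleft hx

end CartanSuper
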